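/- Fix integers d ≥ 1, r ≥ 0 and a strict partition λ with d parts such that λ_i ≤ r + 2d − 2i + 1 for all i. Let F = (f_d)^{μ_d} ∘ (f_{d−1})^{μ_{d−1}} ∘ ⋯ ∘ (f_1)^{μ_1} be the composition in which, for i = 1, …, d in increasing order, the box-adding map f_i is applied μ_i successive times (each application adds one box at the end of row i of the current shape; at each step the hypothesis of the box-adding lemma holds, and the final shape is Z(d,r)). Then F is a well-defined bijection from BS(λ) onto BS(Z(d,r))|_λ. -/

import Mathlib

open scoped BigOperators

namespace BST

/-- `lam` (1-indexed, with `d` parts) is a strict partition: strictly decreasing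
positive parts `lam 1 > lam 2 > ⋯ > lam d > 0`. -/
def IsStrictPartition (d : ℕ) (lam : ℕ → ℕ) : Prop :=
  (∀ i : ℕ, 1 ≤ i → i < d → lam (i + 1) < lam i) ∧ 1 ≤ lam d

/-- The size `|λ| = λ_1 + ⋯ + λ_d`. -/
def sizeP (d : ℕ) (lam : ℕ → ℕ) : ℕ := ∑ i ∈ Finset.Icc 1 d, lam i

/-- The shifted diagram `D(λ) ⊆ ℤ × ℤ`: row `i` (1 ≤ i ≤ d) occupies columns
`i - d, …, λ_i + i - d - 1`. -/
def Diagram (d : ℕ) (lam : ℕ → ℕ) : Set (ℤ × ℤ) :=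
  {p : ℤ × ℤ | 1 ≤ p.1 ∧ p.1 ≤ (d : ℤ) ∧ p.1 - (d : ℤ) ≤ p.2 ∧
    p.2 + (d : ℤ) + 1 ≤ (lam p.1.toNat : ℤ) + p.1}

/-- The hook `H(i,c)`. -/
def Hook (d : ℕ) (lam : ℕ → ℕ) (i c : ℤ) : Set (ℤ × ℤ) :=
  {(i, c)} ∪ {p ∈ Diagram d lam | (p.1 = i ∧ c < p.2) ∨ (p.2 = c ∧ i < p.1)} ∪
    {p ∈ Diagram d lam | c < 0 ∧ p.1 = (d : ℤ) + 1 + c}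

/-- The extended hook `H̃(i,c)`. -/
def ExtHook (d : ℕ) (lam : ℕ → ℕ) (i c : ℤ) : Set (ℤ × ℤ) :=
  Hook d lam i c ∪ {p : ℤ × ℤ | c < 0 ∧ p = ((d : ℤ) + 1 + c, c)}

/-- The extended diagram `D(λ) ∪ {(i, i - d - 1) : 1 ≤ i ≤ d}`. -/
def ExtDiagram (d : ℕ) (lam : ℕ → ℕ) : Set (ℤ × ℤ) :=
  Diagram d lam ∪ {p : ℤ × ℤ | 1 ≤ p.1 ∧ p.1 ≤ (d : ℤ) ∧ p.2 = p.1 - ((d : ℤ) + 1)}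

/-- The extended filling `B̃`, with `B̃(i, i - d - 1) = B(i, 0)`. -/
def ExtFilling (d : ℕ) (B : ℤ × ℤ → ℕ) : ℤ × ℤ → ℕ :=
  fun p => if p.2 = p.1 - ((d : ℤ) + 1) then B (p.1, 0) else B p

/-- The rank function `rk(i,c)`. -/
def rk (d : ℕ) (lam : ℕ → ℕ) (i c : ℤ) : ℤ :=
  if 0 ≤ c then (lam i.toNat : ℤ) - d + i - c
  else (lam i.toNat : ℤ) - d + i + (lam ((d : ℤ) + 1 + c).toNat : ℤ) + c + 1

/-- A bijective filling of `D(λ)` with `1, …, |λ|` (normalized to be `0` off the diagram). -/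
def IsFilling (d : ℕ) (lam : ℕ → ℕ) (B : ℤ × ℤ → ℕ) : Prop :=
  Set.BijOn B (Diagram d lam) (Set.Icc 1 (sizeP d lam)) ∧
    ∀ p : ℤ × ℤ, p ∉ Diagram d lam → B p = 0

/-- A balanced shifted tableau: a bijective filling such that at each box `(i,c)`,
`B(i,c)` is the `rk(i,c)`-th largest entry of the multiset of values of `B̃` on the
extended hook, i.e. exactly `rk(i,c) - 1` boxes of the extended hook carry a value
strictly larger than `B(i,c)`. -/
def IsBalanced (d : ℕ) (lam : ℕ → ℕ) (B : ℤ × ℤ → ℕ) : Prop :=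
  IsFilling d lam B ∧ ∀ p ∈ Diagram d lam,
    ({q ∈ ExtHook d lam p.1 p.2 | B p < ExtFilling d B q}.ncard : ℤ) =
      rk d lam p.1 p.2 - 1

/-- A standard Young tableau of shifted shape `λ`. -/
def IsSYT (d : ℕ) (lam : ℕ → ℕ) (B : ℤ × ℤ → ℕ) : Prop :=
  IsFilling d lam B ∧ ∀ p ∈ Diagram d lam, ∀ q ∈ Diagram d lam,
    ((p.1 = q.1 ∧ p.2 < q.2) → B p < B q) ∧ ((p.2 = q.2 ∧ p.1 < q.1) → B p < B q)

/-- The simple reflections of `W(B_n)`, acting on `ℤ`: `s 0` swaps `1 ↔ -1`,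
and `s a` (for `a ≥ 1`) swaps `a ↔ a+1` and `-a ↔ -(a+1)`. -/
def sB (a : ℕ) : Equiv.Perm ℤ :=
  if a = 0 then Equiv.swap 1 (-1)
  else Equiv.swap (a : ℤ) ((a : ℤ) + 1) * Equiv.swap (-(a : ℤ)) (-(a : ℤ) - 1)

/-- The product `s_{a_1} s_{a_2} ⋯ s_{a_m}` of a word. -/
def wordProd (L : List ℕ) : Equiv.Perm ℤ := (L.map sB).prod

/-- A signed permutation in `W(B_n)`: odd, and the identity beyond `n`. -/
def IsSignedPerm (n : ℕ) (w : Equiv.Perm ℤ) : Prop :=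
  (∀ i : ℤ, w (-i) = -(w i)) ∧ ∀ i : ℤ, (n : ℤ) < |i| → w i = i

/-- The Coxeter length of `w` in `W(B_n)`. -/
noncomputable def lengthB (n : ℕ) (w : Equiv.Perm ℤ) : ℕ :=
  sInf {m : ℕ | ∃ L : List ℕ, (∀ a ∈ L, a < n) ∧ wordProd L = w ∧ L.length = m}

/-- `L` is a reduced word of `w` in `W(B_n)`. -/
def IsReducedWord (n : ℕ) (w : Equiv.Perm ℤ) (L : List ℕ) : Prop :=
  (∀ a ∈ L, a < n) ∧ wordProd L = w ∧ L.length = lengthB n w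

/-- The vector `e_k` (for `k ≥ 1` the `k`-th standard basis vector, with the
conventions `e 0 = 0` and `e (-k) = - e k`), represented as an odd function `ℤ → ℤ`. -/
def eVec (k : ℤ) : ℤ → ℤ :=
  fun t => if t = 0 then 0 else if t = k then 1 else if t = -k then -1 else 0

/-- The positive roots of type `B_n`. -/
def PosRoots (n : ℕ) : Set (ℤ → ℤ) :=
  {v | (∃ i j : ℤ, 1 ≤ i ∧ i < j ∧ j ≤ (n : ℤ) ∧
        (v = eVec j - eVec i ∨ v = eVec j + eVec i)) ∨
       (∃ i : ℤ, 1 ≤ i ∧ i ≤ (n : ℤ) ∧ v = eVec i)}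

/-- The action of a signed permutation on vectors: `w · e_i = e_{w(i)}`. -/
def actB (w : Equiv.Perm ℤ) (v : ℤ → ℤ) : ℤ → ℤ := fun t => v (w⁻¹ t)

/-- The inversion set `Inv(w) = {α ∈ Φ⁺ : w⁻¹ · α ∈ -Φ⁺}`. -/
def InvSet (n : ℕ) (w : Equiv.Perm ℤ) : Set (ℤ → ℤ) :=
  {α | α ∈ PosRoots n ∧ -(actB w⁻¹ α) ∈ PosRoots n}

/-- The simple roots: `α_0 = e_1` and `α_a = e_{a+1} - e_a` for `a ≥ 1`. -/
def alphaRoot (a : ℕ) : ℤ → ℤ :=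
  if a = 0 then eVec 1 else eVec ((a : ℤ) + 1) - eVec (a : ℤ)

/-- The reflection order of a word: `reflOrder L t = γ_{t+1} = s_{a_1} ⋯ s_{a_t} · α_{a_{t+1}}`
(0-indexed). -/
def reflOrder (L : List ℕ) (t : ℕ) : ℤ → ℤ :=
  actB (wordProd (L.take t)) (alphaRoot (L.getD t 0))

/-- The trapezoid `Z(d,r) = (r+2d-1, r+2d-3, …, r+1)`. -/
def Zlam (d r : ℕ) : ℕ → ℕ := fun i => r + 2 * d + 1 - 2 * i

/-- The labeling `f : D(Z(d,r)) → Φ⁺`. -/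
def fLabel (d r : ℕ) (p : ℤ × ℤ) : ℤ → ℤ :=
  if p.2 ≤ 0 then eVec ((d : ℤ) + 1 - p.1) - eVec p.2
  else if p.2 ≤ (r : ℤ) then eVec ((d : ℤ) + 1 - p.1) + eVec (p.2 + (d : ℤ))
  else eVec ((d : ℤ) + 1 - p.1) - eVec (p.2 - (r : ℤ))

/-- The extended labeling `f̃`, with `f̃(i, i - d - 1) = 2 e_{d+1-i}`. -/
def fExtLabel (d r : ℕ) (p : ℤ × ℤ) : ℤ → ℤ :=
  if p.2 = p.1 - ((d : ℤ) + 1) then (2 : ℤ) • eVec ((d : ℤ) + 1 - p.1)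
  else fLabel d r p

/-- `w` is the signed permutation `w^{(d,r)} ∈ W(B_{d+r})`, i.e.
`w(i) = d + i` for `1 ≤ i ≤ r` and `w(i) = -(i - r)` for `r < i ≤ d + r`. -/
def IsWdr (d r : ℕ) (w : Equiv.Perm ℤ) : Prop :=
  IsSignedPerm (d + r) w ∧
    (∀ i : ℤ, 1 ≤ i → i ≤ (r : ℤ) → w i = (d : ℤ) + i) ∧
    (∀ i : ℤ, (r : ℤ) < i → i ≤ (d : ℤ) + (r : ℤ) → w i = -(i - r))


/-- `x` lies strictly between `y` and `z` (i.e. `min(y,z) < x < max(y,z)`). -/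
def Between (x y z : ℕ) : Prop := (y < x ∧ x < z) ∨ (z < x ∧ x < y)

/-- A nonempty list is unimodal: strictly decreasing down to its minimum
(at 0-indexed position `k`), then strictly increasing. -/
def Unimodal (L : List ℕ) : Prop :=
  ∃ k : ℕ, k < L.length ∧
    (∀ a b : ℕ, a < b → b ≤ k → L.getD b 0 < L.getD a 0) ∧
    (∀ a b : ℕ, k ≤ a → a < b → b < L.length → L.getD a 0 < L.getD b 0)

/-- Row `i` of the distinguished tableau of shape `Z(d,r)`:
`(r+d-i, …, r+1, 0, 1, …, r+d-i)`. -/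
def rowWord (d r i : ℕ) : List ℕ :=
  (List.range (r + 2 * (d - i) + 1)).map fun t =>
    if t < d - i then r + (d - i) - t else t - (d - i)

/-- The reading word `π(T) = T_d T_{d-1} ⋯ T_1` of the distinguished tableau of
shape `Z(d,r)`. -/
def piWord (d r : ℕ) : List ℕ :=
  (List.range d).flatMap fun k => rowWord d r (d - k)

/-- `μ_i = Z(d,r)_i - λ_i`. -/
def muF (d r : ℕ) (lam : ℕ → ℕ) (i : ℕ) : ℕ := r + 2 * d + 1 - 2 * i - lam i

/-- `σ_i = μ_1 + ⋯ + μ_i`. -/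
def sigmaF (d r : ℕ) (lam : ℕ → ℕ) (i : ℕ) : ℕ := ∑ t ∈ Finset.Icc 1 i, muF d r lam t

/-- `ν_i = min{μ_i, …, μ_d}`. -/
noncomputable def nuF (d r : ℕ) (lam : ℕ → ℕ) (i : ℕ) : ℕ :=
  sInf {m : ℕ | ∃ j : ℕ, i ≤ j ∧ j ≤ d ∧ m = muF d r lam j}

/-- The word `a^λ`: the concatenation over `i = 1, …, d` of the increasing runs
`(d+r-i-μ_i+1, …, d+r-i)`. -/
def aLamWord (d r : ℕ) (lam : ℕ → ℕ) : List ℕ :=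
  (List.range d).flatMap fun k =>
    (List.range (muF d r lam (k + 1))).map fun t =>
      d + r - (k + 1) - muF d r lam (k + 1) + 1 + t

/-- Row `i` of the tableau `P(w^λ)`: entries `P(i,c) = c` for `c ≥ 0` and
`P(i,c) = r - c - ν_{d+1+c}` for `c < 0`. -/
noncomputable def rowWordP (d r : ℕ) (lam : ℕ → ℕ) (i : ℕ) : List ℕ :=
  (List.range (lam i)).map fun t =>
    if t < d - i then r + (d - i) - t - nuF d r lam (i + 1 + t) else t - (d - i)

/-- The reading word `π(P(w^λ))`. -/
noncomputable def piWordP (d r : ℕ) (lam : ℕ → ℕ) : List ℕ :=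
  (List.range d).flatMap fun k => rowWordP d r lam (d - k)

/-- The shape obtained from `λ` by adding one box at the end of row `i`. -/
def stepShape (lam : ℕ → ℕ) (i : ℕ) : ℕ → ℕ :=
  fun t => if t = i then lam i + 1 else lam t

/-- The box-adding map `f_i` on fillings: swap columns `j = λ_i + i - d` and `j + 1`
(in rows `1, …, i-1`), and put the value `N + 1` in the new box `(i, j)`. -/
def addBox (d : ℕ) (lam : ℕ → ℕ) (i : ℕ) (N : ℕ) (B : ℤ × ℤ → ℕ) : ℤ × ℤ → ℕ :=
  fun p =>
    if p = ((i : ℤ), (lam i : ℤ) + (i : ℤ) - (d : ℤ)) then N + 1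
    else if 1 ≤ p.1 ∧ p.1 < (i : ℤ) ∧ p.2 = (lam i : ℤ) + (i : ℤ) - (d : ℤ) then
      B (p.1, p.2 + 1)
    else if 1 ≤ p.1 ∧ p.1 < (i : ℤ) ∧ p.2 = (lam i : ℤ) + (i : ℤ) - (d : ℤ) + 1 then
      B (p.1, p.2 - 1)
    else B p

/-- Successively apply the box-adding maps along a list of row indices,
tracking the current shape. -/
def FmapAux (d : ℕ) : List ℕ → (ℕ → ℕ) → (ℤ × ℤ → ℕ) → (ℤ × ℤ → ℕ)
  | [], _, B => B
  | i :: rest, lam, B => FmapAux d rest (stepShape lam i) (addBox d lam i (sizeP d lam) B)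

/-- The shape after successively adding boxes along a list of row indices. -/
def shapeAux : List ℕ → (ℕ → ℕ) → (ℕ → ℕ)
  | [], lam => lam
  | i :: rest, lam => shapeAux rest (stepShape lam i)

/-- The list of row indices `1^{μ_1} 2^{μ_2} ⋯ d^{μ_d}` used to pad `λ` to `Z(d,r)`. -/
def rowsList (d r : ℕ) (lam : ℕ → ℕ) : List ℕ :=
  (List.range d).flatMap fun k => List.replicate (muF d r lam (k + 1)) (k + 1)

/-- `BS(Z(d,r))|_λ`: balanced tableaux of shape `Z(d,r)` such that for each
`i ∈ {1,…,d}` the entries `N + σ_{i-1} + 1, …, N + σ_i` all occur in row `i`. -/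
def BSRestricted (d r : ℕ) (lam : ℕ → ℕ) : Set (ℤ × ℤ → ℕ) :=
  {T | IsBalanced d (Zlam d r) T ∧ ∀ i : ℕ, 1 ≤ i → i ≤ d →
    ∀ k : ℕ, sizeP d lam + sigmaF d r lam (i - 1) + 1 ≤ k →
      k ≤ sizeP d lam + sigmaF d r lam i →
      ∃ c : ℤ, ((i : ℤ), c) ∈ Diagram d (Zlam d r) ∧ T ((i : ℤ), c) = k}

/-- `w ∈ W(B_n)` pattern embeds the signed pattern `v` (given as its one-line
notation, a list of nonzero integers). -/
def PatternEmbeds (n : ℕ) (w : Equiv.Perm ℤ) (v : List ℤ) : Prop :=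
  ∃ idx : Fin v.length → ℤ, StrictMono idx ∧
    (∀ j, 1 ≤ idx j ∧ idx j ≤ (n : ℤ)) ∧
    (∀ j, 0 < w (idx j) ↔ 0 < v.get j) ∧
    (∀ j k, |w (idx j)| < |w (idx k)| ↔ |v.get j| < |v.get k|)


structure Ctx (d : ℕ) (lam : ℕ → ℕ) (i : ℕ) (j : ℤ) : Prop where
  h1 : 1 ≤ (i : ℤ)
  hid : (i : ℤ) ≤ d
  hj : (lam i : ℤ) + (i : ℤ) - (d : ℤ) = j
  hj1 : 1 ≤ j
  above : ∀ a : ℤ, 1 ≤ a → a < i → j + d + 2 ≤ (lam a.toNat : ℤ) + a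
  below : ∀ a : ℤ, i < a → a ≤ d → (lam a.toNat : ℤ) + a ≤ j + d

def phi (i : ℕ) (j : ℤ) (p : ℤ × ℤ) : ℤ × ℤ :=
  if 1 ≤ p.1 ∧ p.1 < (i : ℤ) ∧ p.2 = j then (p.1, p.2 + 1)
  else if 1 ≤ p.1 ∧ p.1 < (i : ℤ) ∧ p.2 = j + 1 then (p.1, p.2 - 1) else p

lemma phi_phi (i : ℕ) (j : ℤ) (p : ℤ × ℤ) : phi i j (phi i j p) = p := by
  obtain ⟨a, c⟩ := p
  unfold phi
  split_ifs <;> simp_all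

lemma phi_inj (i : ℕ) (j : ℤ) : Function.Injective (phi i j) :=
  Function.Involutive.injective (phi_phi i j)

lemma phi_ij (i : ℕ) (j : ℤ) : phi i j ((i : ℤ), j) = ((i : ℤ), j) := by
  simp [phi]

lemma phi_ne (i : ℕ) (j : ℤ) {q : ℤ × ℤ} (h : q ≠ ((i : ℤ), j)) : phi i j q ≠ ((i : ℤ), j) := by
  intro h2
  apply h
  rw [← phi_phi i j q, h2, phi_ij]

lemma mem_phi_image (i : ℕ) (j : ℤ) (S : Set (ℤ × ℤ)) (q : ℤ × ℤ) :
    q ∈ phi i j '' S ↔ phi i j q ∈ S := by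
  constructor
  · rintro ⟨x, hx, rfl⟩
    rwa [phi_phi]
  · intro h
    exact ⟨_, h, phi_phi i j q⟩

lemma mem_diag (d : ℕ) (lam : ℕ → ℕ) (a c : ℤ) :
    (a, c) ∈ Diagram d lam ↔ 1 ≤ a ∧ a ≤ (d : ℤ) ∧ a - (d : ℤ) ≤ c ∧
      c + (d : ℤ) + 1 ≤ (lam a.toNat : ℤ) + a := Iff.rfl

lemma mem_eh (d : ℕ) (lam : ℕ → ℕ) (i c a b : ℤ) :
    (a, b) ∈ ExtHook d lam i c ↔ (a = i ∧ b = c) ∨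
      ((a, b) ∈ Diagram d lam ∧ ((a = i ∧ c < b) ∨ (b = c ∧ i < a) ∨ (c < 0 ∧ a = d + 1 + c)))
      ∨ (c < 0 ∧ a = d + 1 + c ∧ b = c) := by
  simp only [ExtHook, Hook, Set.mem_union, Set.mem_singleton_iff, Set.mem_ofPred_eq, Prod.mk.injEq]
  tauto

lemma step_toNat {lam : ℕ → ℕ} {i : ℕ} (a : ℤ) (ha : 1 ≤ a) :
    ((stepShape lam i a.toNat : ℕ) : ℤ) = (lam a.toNat : ℤ) + if a = i then 1 else 0 := by
  unfold stepShape
  by_cases h : a = i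
  · subst h; simp
  · have : a.toNat ≠ i := by omega
    simp [h, this]

lemma diag_finite (d : ℕ) (lam : ℕ → ℕ) : (Diagram d lam).Finite := by
  apply Set.Finite.subset (s := ⋃ a ∈ Set.Icc (1 : ℤ) d,
    (fun c : ℤ => (a, c)) '' Set.Icc (a - d) ((lam a.toNat : ℤ) + a - d - 1))
  · apply Set.Finite.biUnion (Set.finite_Icc _ _)
    intro a _
    exact (Set.finite_Icc _ _).image _
  · rintro ⟨a, c⟩ h
    rw [mem_diag] at h
    simp only [Set.mem_iUnion, Set.mem_image, Set.mem_Icc, Prod.mk.injEq]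
    exact ⟨a, ⟨h.1, h.2.1⟩, c, by omega, rfl, rfl⟩

lemma eh_finite (d : ℕ) (lam : ℕ → ℕ) (i c : ℤ) : (ExtHook d lam i c).Finite := by
  unfold ExtHook Hook
  refine Set.Finite.union (Set.Finite.union (Set.Finite.union (Set.finite_singleton _) ?_) ?_) ?_
  · exact (diag_finite d lam).subset (Set.sep_subset _ _)
  · exact (diag_finite d lam).subset (Set.sep_subset _ _)
  · exact (Set.finite_singleton ((d : ℤ) + 1 + c, c)).subset (by rintro p ⟨_, h⟩; exact h)

structure Rel (i : ℕ) (j : ℤ) (N : ℕ) (B T : ℤ × ℤ → ℕ) : Prop where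
  t0 : T ((i : ℤ), j) = N + 1
  b0 : B ((i : ℤ), j) = 0
  eq : ∀ q, q ≠ ((i : ℤ), j) → T q = B (phi i j q)

lemma phi_diag {d : ℕ} {lam : ℕ → ℕ} {i : ℕ} {j : ℤ} (C : Ctx d lam i j) (q : ℤ × ℤ) :
    phi i j q ∈ Diagram d lam ↔ q ∈ Diagram d lam := by
  obtain ⟨h1, hid, hj, hj1, ab, be⟩ := C
  obtain ⟨a, c⟩ := q
  have := ab a
  unfold phi
  clear ab be
  dsimp only
  split_ifs <;> simp only [mem_diag] <;> omega

lemma ij_nmem {d : ℕ} {lam : ℕ → ℕ} {i : ℕ} {j : ℤ} (C : Ctx d lam i j) :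
    ((i : ℤ), j) ∉ Diagram d lam := by
  obtain ⟨h1, hid, hj, hj1, ab, be⟩ := C
  rw [mem_diag]
  simp
  omega

lemma diag_step {d : ℕ} {lam : ℕ → ℕ} {i : ℕ} {j : ℤ} (C : Ctx d lam i j) :
    Diagram d (stepShape lam i) = insert ((i : ℤ), j) (Diagram d lam) := by
  obtain ⟨h1, hid, hj, hj1, ab, be⟩ := C
  ext ⟨a, c⟩
  simp only [Set.mem_insert_iff, mem_diag, Prod.mk.injEq]
  by_cases ha : 1 ≤ a
  · rw [step_toNat a ha]
    by_cases h : a = i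
    · subst h; simp; omega
    · simp [h]
  · omega

lemma size_step {d : ℕ} {lam : ℕ → ℕ} {i : ℕ} (h1 : 1 ≤ i) (hd : i ≤ d) :
    sizeP d (stepShape lam i) = sizeP d lam + 1 := by
  unfold sizeP
  have hm : i ∈ Finset.Icc 1 d := by simp; omega
  rw [← Finset.add_sum_erase _ _ hm, ← Finset.add_sum_erase _ lam hm]
  have : ∑ x ∈ (Finset.Icc 1 d).erase i, stepShape lam i x
      = ∑ x ∈ (Finset.Icc 1 d).erase i, lam x := by
    apply Finset.sum_congr rfl
    intro x hx
    simp [stepShape, Finset.ne_of_mem_erase hx]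
  rw [this]
  simp [stepShape]; omega

lemma step_fill {d : ℕ} {lam : ℕ → ℕ} {i : ℕ} {j : ℤ} (C : Ctx d lam i j) {B T : ℤ × ℤ → ℕ}
    (R : Rel i j (sizeP d lam) B T) :
    IsFilling d lam B ↔ IsFilling d (stepShape lam i) T := by
  have hs : sizeP d (stepShape lam i) = sizeP d lam + 1 :=
    size_step (by have := C.h1; omega) (by have := C.hid; omega)
  have hne : ∀ q ∈ Diagram d lam, q ≠ ((i : ℤ), j) := by
    rintro q hq rfl; exact ij_nmem C hq
  have hB : Set.BijOn B (Diagram d lam) (Set.Icc 1 (sizeP d lam)) ↔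
      Set.BijOn T (Diagram d lam) (Set.Icc 1 (sizeP d lam)) := by
    have hp : Set.BijOn (phi i j) (Diagram d lam) (Diagram d lam) :=
      ⟨fun q hq => (phi_diag C q).2 hq, (phi_inj i j).injOn,
        fun q hq => ⟨phi i j q, (phi_diag C q).2 hq, phi_phi i j q⟩⟩
    constructor
    · intro h
      exact (h.comp hp).congr (fun q hq => (R.eq q (hne q hq)).symm)
    · intro h
      refine (h.comp hp).congr (fun q hq => ?_)
      show T (phi i j q) = B q
      rw [R.eq _ (phi_ne i j (hne q hq)), phi_phi]
  have hI : Set.Icc 1 (sizeP d lam + 1) = insert (sizeP d lam + 1) (Set.Icc 1 (sizeP d lam)) := by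
    ext x; simp; omega
  unfold IsFilling
  rw [hB, hs, diag_step C, hI]
  constructor
  · rintro ⟨h, h0⟩
    refine ⟨?_, ?_⟩
    · have := Set.BijOn.insert (a := ((i : ℤ), j)) h (by rw [R.t0]; simp)
      rwa [R.t0] at this
    · intro p hp
      simp only [Set.mem_insert_iff, not_or] at hp
      rw [R.eq p hp.1]
      exact h0 _ (by rw [phi_diag C]; exact hp.2)
  · rintro ⟨h, h0⟩
    refine ⟨?_, ?_⟩
    · have h2 : Set.BijOn T (insert ((i : ℤ), j) (Diagram d lam))
          (insert (T ((i : ℤ), j)) (Set.Icc 1 (sizeP d lam))) := by rw [R.t0]; exact h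
      exact (Set.BijOn.insert_iff (ij_nmem C) (by rw [R.t0]; simp)).1 h2
    · intro p hp
      by_cases hpe : p = ((i : ℤ), j)
      · rw [hpe, R.b0]
      · have := R.eq _ (phi_ne i j hpe)
        rw [phi_phi] at this
        rw [← this]
        apply h0
        simp only [Set.mem_insert_iff, not_or]
        exact ⟨phi_ne i j hpe, by rw [phi_diag C]; exact hp⟩

lemma ef_diag {d : ℕ} {lam : ℕ → ℕ} {B : ℤ × ℤ → ℕ} {q : ℤ × ℤ} (h : q ∈ Diagram d lam) :
    ExtFilling d B q = B q := by
  obtain ⟨a, c⟩ := q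
  rw [mem_diag] at h
  unfold ExtFilling
  rw [if_neg (by simp; omega)]

lemma ef_rel {d : ℕ} {lam : ℕ → ℕ} {i : ℕ} {j : ℤ} {N : ℕ} (C : Ctx d lam i j) {B T : ℤ × ℤ → ℕ}
    (R : Rel i j N B T) {q : ℤ × ℤ} (hq : q ≠ ((i : ℤ), j)) :
    ExtFilling d T q = ExtFilling d B (phi i j q) := by
  obtain ⟨h1, hid, hj, hj1, ab, be⟩ := C
  obtain ⟨a, c⟩ := q
  by_cases h : c = a - ((d : ℤ) + 1)
  · have hp : phi i j (a, c) = (a, c) := by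
      unfold phi
      dsimp only
      rw [if_neg (by omega), if_neg (by omega)]
    have hp0 : phi i j (a, 0) = (a, 0) := by
      unfold phi
      dsimp only
      rw [if_neg (by omega), if_neg (by omega)]
    rw [hp]
    simp only [ExtFilling, h, if_true]
    rw [R.eq _ (by simp; omega), hp0]
  · have hp : (phi i j (a, c)).2 ≠ (phi i j (a, c)).1 - ((d : ℤ) + 1) := by
      unfold phi
      dsimp only
      split_ifs <;> dsimp only <;> omega
    simp only [ExtFilling, h, hp, if_false]
    exact R.eq _ hq

def bal (d : ℕ) (lam : ℕ → ℕ) (B : ℤ × ℤ → ℕ) (p : ℤ × ℤ) : Prop :=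
  ({q ∈ ExtHook d lam p.1 p.2 | B p < ExtFilling d B q}.ncard : ℤ) = rk d lam p.1 p.2 - 1

/-- shift right below row `a` -/
def psi (a e : ℤ) (q : ℤ × ℤ) : ℤ × ℤ := if q.1 = a then q else (q.1, q.2 + e)

lemma psi_inj (a e : ℤ) : Function.Injective (psi a e) := by
  rintro ⟨x, y⟩ ⟨z, w⟩ h
  unfold psi at h
  dsimp only at h
  split_ifs at h <;> simp only [Prod.mk.injEq] at h ⊢ <;> omega

lemma mono1 {d : ℕ} {lam : ℕ → ℕ} {i : ℕ} {j : ℤ} (C : Ctx d lam i j) {B : ℤ × ℤ → ℕ}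
    (hinj : Set.InjOn B (Diagram d lam)) (hb : ∀ p ∈ Diagram d lam, bal d lam B p) :
    ∀ n : ℕ, ∀ a : ℤ, 1 ≤ a → a < i → (i - a).toNat = n → B (a, j) < B (a, j + 1) := by
  intro n
  induction n using Nat.strong_induction_on with
  | _ n ih =>
  intro a ha hai hn
  obtain ⟨h1, hid, hj, hj1, ab, be⟩ := id C
  have haa := ab a ha hai
  have m1 : (a, j) ∈ Diagram d lam := by rw [mem_diag]; omega
  have m2 : (a, j + 1) ∈ Diagram d lam := by rw [mem_diag]; omega
  by_contra hlt
  have hne : B (a, j) ≠ B (a, j + 1) := by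
    intro h
    have := hinj m1 m2 h
    simp at this
  have hgt : B (a, j + 1) < B (a, j) := by omega
  have b1 := hb _ m1
  have b2 := hb _ m2
  unfold bal rk at b1 b2
  dsimp only at b1 b2
  rw [if_pos (by omega)] at b1 b2
  have hle : {q ∈ ExtHook d lam a j | B (a, j) < ExtFilling d B q}.ncard ≤
      {q ∈ ExtHook d lam a (j + 1) | B (a, j + 1) < ExtFilling d B q}.ncard := by
    apply Set.ncard_le_ncard_of_injOn (psi a 1) _ (psi_inj a 1).injOn
      ((eh_finite d lam a (j + 1)).subset (Set.sep_subset _ _))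
    rintro ⟨x, y⟩ ⟨hq, hv⟩
    rw [mem_eh] at hq
    have hqd : (x, y) ∈ Diagram d lam := by
      rcases hq with ⟨rfl, rfl⟩ | h | h
      · exact m1
      · exact h.1
      · omega
    rw [ef_diag hqd] at hv
    by_cases hx : x = a
    · subst hx
      have hy : y ≠ j := by rintro rfl; omega
      have hy2 : y ≠ j + 1 := by rintro rfl; omega
      have e : psi x 1 (x, y) = (x, y) := by simp [psi]
      rw [e]
      refine ⟨?_, ?_⟩
      · rw [mem_eh]
        right; left
        refine ⟨hqd, ?_⟩
        omega
      · rw [ef_diag hqd]; omega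
    · have e : psi a 1 (x, y) = (x, y + 1) := by simp [psi, hx]
      rw [e]
      have hy : y = j ∧ a < x := by omega
      obtain ⟨rfl, hax⟩ := hy
      have hxi : x < i := by
        rw [mem_diag] at hqd
        by_contra hxi
        rcases eq_or_lt_of_le (not_lt.1 hxi) with h | h
        · subst h
          simp at hqd
          omega
        · have := be x h (by omega)
          omega
      have hxx := ab x (by omega) hxi
      have hd' : (x, y + 1) ∈ Diagram d lam := by rw [mem_diag]; omega
      have := ih _ (by omega) x (by omega) hxi rfl
      refine ⟨?_, ?_⟩
      · rw [mem_eh]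
        right; left
        refine ⟨hd', ?_⟩
        omega
      · rw [ef_diag hd']; omega
  omega

lemma mono2 {d : ℕ} {lam : ℕ → ℕ} {i : ℕ} {j : ℤ} (C : Ctx d lam i j) {T : ℤ × ℤ → ℕ}
    (hinj : Set.InjOn T (Diagram d (stepShape lam i)))
    (hmax : ∀ p ∈ Diagram d lam, T p < T ((i : ℤ), j))
    (hb : ∀ p ∈ Diagram d (stepShape lam i), bal d (stepShape lam i) T p) :
    ∀ n : ℕ, ∀ a : ℤ, 1 ≤ a → a < i → (i - a).toNat = n → T (a, j + 1) < T (a, j) := by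
  intro n
  induction n using Nat.strong_induction_on with
  | _ n ih =>
  intro a ha hai hn
  obtain ⟨h1, hid, hj, hj1, ab, be⟩ := id C
  have haa := ab a ha hai
  have k1 : (a, j) ∈ Diagram d lam := by rw [mem_diag]; omega
  have k2 : (a, j + 1) ∈ Diagram d lam := by rw [mem_diag]; omega
  have hsub : Diagram d lam ⊆ Diagram d (stepShape lam i) := by
    rw [diag_step C]; exact Set.subset_insert _ _
  have m1 := hsub k1
  have m2 := hsub k2
  have m3 : ((i : ℤ), j) ∈ Diagram d (stepShape lam i) := by rw [diag_step C]; simp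
  by_contra hlt
  have hne : T (a, j) ≠ T (a, j + 1) := by
    intro h
    have := hinj m1 m2 h
    simp at this
  have hgt : T (a, j) < T (a, j + 1) := by omega
  have b1 := hb _ m1
  have b2 := hb _ m2
  unfold bal rk at b1 b2
  dsimp only at b1 b2
  rw [if_pos (by omega)] at b1 b2
  set S2 := {q ∈ ExtHook d (stepShape lam i) a j | T (a, j) < ExtFilling d T q} with hS2
  have f2 : S2.Finite := (eh_finite d _ a j).subset (Set.sep_subset _ _)
  have hin1 : ((i : ℤ), j) ∈ S2 := by
    refine ⟨?_, ?_⟩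
    · rw [mem_eh]; right; left; exact ⟨m3, by omega⟩
    · rw [ef_diag m3]; exact hmax _ k1
  have hin2 : (a, j + 1) ∈ S2 := by
    refine ⟨?_, ?_⟩
    · rw [mem_eh]; right; left; exact ⟨m2, by omega⟩
    · rw [ef_diag m2]; exact hgt
  have hle : {q ∈ ExtHook d (stepShape lam i) a (j + 1) | T (a, j + 1) < ExtFilling d T q}.ncard ≤
      ((S2 \ {((i : ℤ), j)}) \ {(a, j + 1)}).ncard := by
    apply Set.ncard_le_ncard_of_injOn (psi a (-1)) _ (psi_inj a (-1)).injOn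
      (f2.subset (fun x hx => hx.1.1))
    rintro ⟨x, y⟩ ⟨hq, hv⟩
    rw [mem_eh] at hq
    have hqd : (x, y) ∈ Diagram d (stepShape lam i) := by
      rcases hq with ⟨rfl, rfl⟩ | h | h
      · exact m2
      · exact h.1
      · omega
    rw [ef_diag hqd] at hv
    by_cases hx : x = a
    · subst hx
      have hy : y ≠ j + 1 := by rintro rfl; omega
      have e : psi x (-1) (x, y) = (x, y) := by simp [psi]
      rw [e]
      refine ⟨⟨⟨?_, ?_⟩, ?_⟩, ?_⟩
      · rw [mem_eh]
        right; left
        refine ⟨hqd, ?_⟩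
        omega
      · rw [ef_diag hqd]; omega
      · simp; omega
      · simp; omega
    · have e : psi a (-1) (x, y) = (x, y - 1) := by simp [psi, hx]; rfl
      rw [e]
      have hy : y = j + 1 ∧ a < x := by omega
      obtain ⟨rfl, hax⟩ := hy
      have hxi : x < i := by
        rw [mem_diag, step_toNat x (by omega)] at hqd
        by_contra hxi
        rcases eq_or_lt_of_le (not_lt.1 hxi) with h | h
        · subst h
          simp at hqd
          omega
        · have := be x h (by omega)
          rw [if_neg (by omega)] at hqd
          omega
      have hxx := ab x (by omega) hxi
      have hd' : (x, j + 1 - 1) ∈ Diagram d (stepShape lam i) :=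
        hsub (by rw [mem_diag]; omega)
      have := ih _ (by omega) x (by omega) hxi rfl
      refine ⟨⟨⟨?_, ?_⟩, ?_⟩, ?_⟩
      · rw [mem_eh]
        right; left
        refine ⟨hd', ?_⟩
        omega
      · rw [ef_diag hd']
        have e2 : j + 1 - 1 = j := by ring
        rw [e2]
        omega
      · simp; omega
      · simp
  have c1 := Set.ncard_sdiff_singleton_add_one hin1 f2
  have c2 := Set.ncard_sdiff_singleton_add_one (s := S2 \ {((i : ℤ), j)}) (a := (a, j + 1))
    ⟨hin2, by simp⟩ (f2.subset Set.sdiff_subset)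
  omega

set_option maxHeartbeats 2000000 in
lemma core {d : ℕ} {lam : ℕ → ℕ} {i : ℕ} {j : ℤ} {N : ℕ} (C : Ctx d lam i j) {B T : ℤ × ℤ → ℕ}
    (R : Rel i j N B T) (hN : ∀ p ∈ Diagram d lam, B p ≤ N)
    (hm : ∀ a : ℤ, 1 ≤ a → a < i → B (a, j) < B (a, j + 1)) {p : ℤ × ℤ}
    (hp : p ∈ Diagram d lam) :
    bal d lam B p ↔ bal d (stepShape lam i) T (phi i j p) := by
  obtain ⟨h1, hid, hj, hj1, ab, be⟩ := id C
  have hTp : T (phi i j p) = B p := by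
    rw [R.eq _ (phi_ne i j (by rintro rfl; exact ij_nmem C hp)), phi_phi]
  have hpN := hN p hp
  set S := {q ∈ ExtHook d lam p.1 p.2 | B p < ExtFilling d B q} with hS
  set S' := {q ∈ ExtHook d (stepShape lam i) (phi i j p).1 (phi i j p).2 |
    T (phi i j p) < ExtFilling d T q} with hS'
  have fS : S.Finite := (eh_finite d _ _ _).subset (Set.sep_subset _ _)
  have hcard : (phi i j '' S).ncard = S.ncard := Set.ncard_image_of_injective _ (phi_inj i j)
  have hij : ((i : ℤ), j) ∉ phi i j '' S := by
    rw [mem_phi_image, phi_ij]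
    rintro ⟨h, -⟩
    rw [mem_eh] at h
    rcases h with h | h | h
    · exact ij_nmem C (by rw [h.1, h.2]; exact hp)
    · exact ij_nmem C h.1
    · omega
  have hijd : ExtFilling d T ((i : ℤ), j) = N + 1 := by
    rw [ef_diag (lam := stepShape lam i) (by rw [diag_step C]; simp), R.t0]
  unfold bal
  rw [← hS, ← hS']
  -- membership away from the new box
  have hoff : ∀ q, q ≠ ((i : ℤ), j) → (q ∈ S' ↔
      q ∈ ExtHook d (stepShape lam i) (phi i j p).1 (phi i j p).2 ∧
        B p < ExtFilling d B (phi i j q)) := by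
    intro q hq
    rw [hS', Set.mem_sep_iff, hTp, ef_rel C R hq]
  have hon : ((i : ℤ), j) ∈ S' ↔
      ((i : ℤ), j) ∈ ExtHook d (stepShape lam i) (phi i j p).1 (phi i j p).2 := by
    rw [hS', Set.mem_sep_iff, hTp, hijd]
    constructor
    · exact fun h => h.1
    · exact fun h => ⟨h, by omega⟩
  have key1 : (∀ q, q ≠ ((i : ℤ), j) → B p < ExtFilling d B (phi i j q) →
      (q ∈ ExtHook d (stepShape lam i) (phi i j p).1 (phi i j p).2 ↔
        phi i j q ∈ ExtHook d lam p.1 p.2)) →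
      ((i : ℤ), j) ∈ ExtHook d (stepShape lam i) (phi i j p).1 (phi i j p).2 →
      S'.ncard = S.ncard + 1 := by
    intro h1 h2
    have : S' = insert ((i : ℤ), j) (phi i j '' S) := by
      ext q
      by_cases hq : q = ((i : ℤ), j)
      · subst hq
        simp [hon, h2]
      · rw [hoff q hq, Set.mem_insert_iff, mem_phi_image, hS, Set.mem_sep_iff]
        have := h1 q hq
        tauto
    rw [this, Set.ncard_insert_of_notMem hij (fS.image _), hcard]
  have key0 : (∀ q, q ≠ ((i : ℤ), j) → B p < ExtFilling d B (phi i j q) →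
      (q ∈ ExtHook d (stepShape lam i) (phi i j p).1 (phi i j p).2 ↔
        phi i j q ∈ ExtHook d lam p.1 p.2)) →
      ((i : ℤ), j) ∉ ExtHook d (stepShape lam i) (phi i j p).1 (phi i j p).2 →
      S'.ncard = S.ncard := by
    intro h1 h2
    have : S' = phi i j '' S := by
      ext q
      by_cases hq : q = ((i : ℤ), j)
      · subst hq
        simp only [hon, h2, hij]
      · rw [hoff q hq, mem_phi_image, hS, Set.mem_sep_iff]
        have := h1 q hq
        tauto
    rw [this, hcard]
  have dstep : ∀ q, q ≠ ((i : ℤ), j) →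
      (q ∈ Diagram d (stepShape lam i) ↔ q ∈ Diagram d lam) := by
    intro q hq
    rw [diag_step C, Set.mem_insert_iff]; tauto
  have m3 : ((i : ℤ), j) ∈ Diagram d (stepShape lam i) := by rw [diag_step C]; simp
  obtain ⟨a, c⟩ := p
  have hp' := hp
  rw [mem_diag] at hp'
  by_cases hc1 : a < i ∧ c = j
  · obtain ⟨hai, rfl⟩ := hc1
    have haa := ab a (by omega) hai
    have hph : phi i c (a, c) = (a, c + 1) := by
      unfold phi; dsimp only; rw [if_pos (by omega)]
    have hmem : (a, c + 1) ∈ Diagram d lam := by rw [mem_diag]; omega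
    have hin : (a, c + 1) ∈ S := by
      refine ⟨?_, ?_⟩
      · rw [mem_eh]; right; left; exact ⟨hmem, by omega⟩
      · rw [ef_diag hmem]; exact hm a (by omega) hai
    have hSe : S' = phi i c '' (S \ {(a, c + 1)}) := by
      ext ⟨x, y⟩
      by_cases hq : (x, y) = ((i : ℤ), c)
      · rw [hq, hon, mem_phi_image, phi_ij, hph, mem_eh]
        have : ((i : ℤ), c) ∉ S := by rwa [mem_phi_image, phi_ij] at hij
        simp only [Set.mem_sdiff, this, false_and, iff_false]
        omega
      · rw [hoff _ hq, mem_phi_image, Set.mem_sdiff, hS, Set.mem_sep_iff, hph, mem_eh, dstep _ hq,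
          ← phi_diag C]
        have hq2 : ¬ (x = i ∧ y = c) := by simpa using hq
        by_cases hxy1 : 1 ≤ x ∧ x < (i : ℤ) ∧ y = c
        · have e : phi i c (x, y) = (x, y + 1) := by unfold phi; dsimp only; rw [if_pos hxy1]
          rw [e, mem_eh]; simp only [Set.mem_singleton_iff, Prod.mk.injEq]
          omega
        by_cases hxy2 : 1 ≤ x ∧ x < (i : ℤ) ∧ y = c + 1
        · have e : phi i c (x, y) = (x, y - 1) := by
            unfold phi; dsimp only; rw [if_neg hxy1, if_pos hxy2]
          have hxx := ab x (by omega) (by omega)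
          rw [e, mem_eh]; simp only [Set.mem_singleton_iff, Prod.mk.injEq, mem_diag]
          omega
        · have e : phi i c (x, y) = (x, y) := by
            unfold phi; dsimp only; rw [if_neg hxy1, if_neg hxy2]
          have hbx := be x
          rw [e, mem_eh]; simp only [Set.mem_singleton_iff, Prod.mk.injEq, mem_diag]
          by_cases hxi : x = i
          · subst hxi
            simp
            omega
          · omega
    have hS1 : S'.ncard + 1 = S.ncard := by
      rw [hSe, Set.ncard_image_of_injective _ (phi_inj i c)]
      exact Set.ncard_sdiff_singleton_add_one hin fS
    rw [hph]
    unfold rk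
    dsimp only
    rw [if_pos (by omega), if_pos (by omega), step_toNat a (by omega), if_neg (by omega)]
    omega
  by_cases hc2 : a < i ∧ c = j + 1
  · obtain ⟨hai, rfl⟩ := hc2
    have haa := ab a (by omega) hai
    have hph : phi i j (a, j + 1) = (a, j) := by
      unfold phi; dsimp only; rw [if_neg (by omega), if_pos (by omega)]; simp
    have hS1 : S'.ncard = S.ncard + 1 := by
      apply key1
      · rintro ⟨x, y⟩ hq hv
        rw [hph, mem_eh, dstep _ hq, ← phi_diag C]
        have hq2 : ¬ (x = i ∧ y = j) := by simpa using hq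
        by_cases hxy1 : 1 ≤ x ∧ x < (i : ℤ) ∧ y = j
        · have e : phi i j (x, y) = (x, y + 1) := by unfold phi; dsimp only; rw [if_pos hxy1]
          have hxx := ab x (by omega) (by omega)
          rw [e, mem_eh]; simp only [mem_diag]
          omega
        by_cases hxy2 : 1 ≤ x ∧ x < (i : ℤ) ∧ y = j + 1
        · have e : phi i j (x, y) = (x, y - 1) := by
            unfold phi; dsimp only; rw [if_neg hxy1, if_pos hxy2]
          rw [e] at hv ⊢
          have hxa : x ≠ a := by
            rintro rfl
            have h1 : (x, y - 1) ∈ Diagram d lam := by rw [mem_diag]; omega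
            rw [ef_diag h1] at hv
            have h2 := hm x (by omega) hai
            have e2 : y - 1 = j := by omega
            rw [e2] at hv
            omega
          rw [mem_eh]; simp only [mem_diag]
          omega
        · have e : phi i j (x, y) = (x, y) := by
            unfold phi; dsimp only; rw [if_neg hxy1, if_neg hxy2]
          have hbx := be x
          rw [e, mem_eh]; simp only [mem_diag]
          by_cases hxi : x = i
          · subst hxi
            simp
            omega
          · omega
      · rw [hph, mem_eh]
        right; left; exact ⟨m3, by omega⟩
    rw [hph]
    unfold rk
    dsimp only
    rw [if_pos (by omega), if_pos (by omega), step_toNat a (by omega), if_neg (by omega)]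
    omega
  have hph : phi i j (a, c) = (a, c) := by
    unfold phi; dsimp only; rw [if_neg (by omega), if_neg (by omega)]
  have hk : ∀ q, q ≠ ((i : ℤ), j) → B (a, c) < ExtFilling d B (phi i j q) →
      (q ∈ ExtHook d (stepShape lam i) (phi i j (a, c)).1 (phi i j (a, c)).2 ↔
        phi i j q ∈ ExtHook d lam (a, c).1 (a, c).2) := by
    rintro ⟨x, y⟩ hq -
    rw [hph, mem_eh, dstep _ hq, ← phi_diag C]
    dsimp only
    have hca : a = i → c < j := by rintro rfl; simp at hp'; omega
    have hca2 : i < a → c < j := by intro h; have := be a h (by omega); omega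
    by_cases hxy1 : 1 ≤ x ∧ x < (i : ℤ) ∧ y = j
    · have e : phi i j (x, y) = (x, y + 1) := by unfold phi; dsimp only; rw [if_pos hxy1]
      have hxx := ab x (by omega) (by omega)
      rw [e, mem_eh]; simp only [mem_diag]
      omega
    by_cases hxy2 : 1 ≤ x ∧ x < (i : ℤ) ∧ y = j + 1
    · have e : phi i j (x, y) = (x, y - 1) := by
        unfold phi; dsimp only; rw [if_neg hxy1, if_pos hxy2]
      have hxx := ab x (by omega) (by omega)
      rw [e, mem_eh]; simp only [mem_diag]
      omega
    · have e : phi i j (x, y) = (x, y) := by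
        unfold phi; dsimp only; rw [if_neg hxy1, if_neg hxy2]
      rw [e, mem_eh]
  by_cases hin : a = i ∨ (c < 0 ∧ (d : ℤ) + 1 + c = i)
  · have hc := key1 hk (by
      rw [hph, mem_eh]
      right; left
      refine ⟨m3, ?_⟩
      by_cases hai : a = i
      · subst hai; simp at hp'; omega
      · omega)
    rw [hph]
    unfold rk
    dsimp only
    rw [step_toNat a (by omega)]
    by_cases hc0 : 0 ≤ c
    · rw [if_pos hc0, if_pos hc0, if_pos (by omega)]; omega
    · rw [if_neg hc0, if_neg hc0, step_toNat _ (by omega)]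
      by_cases hai : a = i
      · rw [if_pos hai, if_neg (by omega)]; omega
      · rw [if_neg hai, if_pos (by omega)]; omega
  · have hc := key0 hk (by
      rw [hph, mem_eh]
      dsimp only
      omega)
    rw [hph]
    unfold rk
    dsimp only
    rw [step_toNat a (by omega), if_neg (show ¬ a = i by omega)]
    by_cases hc0 : 0 ≤ c
    · rw [if_pos hc0, if_pos hc0]; omega
    · rw [if_neg hc0, if_neg hc0, step_toNat _ (by omega), if_neg (show ¬ (d : ℤ) + 1 + c = i by omega)]; omega

lemma step_bal {d : ℕ} {lam : ℕ → ℕ} {i : ℕ} {j : ℤ} (C : Ctx d lam i j) {B T : ℤ × ℤ → ℕ}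
    (R : Rel i j (sizeP d lam) B T) :
    IsBalanced d lam B ↔ IsBalanced d (stepShape lam i) T := by
  have hsf := step_fill C R
  have hne : ∀ q ∈ Diagram d lam, q ≠ ((i : ℤ), j) := by
    rintro q hq rfl; exact ij_nmem C hq
  constructor
  · rintro ⟨hf, hb⟩
    have hb' : ∀ p ∈ Diagram d lam, bal d lam B p := hb
    have hm : ∀ a : ℤ, 1 ≤ a → a < i → B (a, j) < B (a, j + 1) :=
      fun a h1 h2 => mono1 C hf.1.injOn hb' _ a h1 h2 rfl
    have hN : ∀ p ∈ Diagram d lam, B p ≤ sizeP d lam := fun p hp => (hf.1.mapsTo hp).2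
    refine ⟨hsf.1 hf, ?_⟩
    intro p hp
    change bal d (stepShape lam i) T p
    rw [diag_step C] at hp
    rcases hp with rfl | hp
    · have hz : {q ∈ ExtHook d (stepShape lam i) i j | T ((i : ℤ), j) < ExtFilling d T q} = ∅ := by
        ext ⟨x, y⟩
        simp only [Set.mem_sep_iff, Set.mem_empty_iff_false, iff_false, not_and, not_lt]
        intro h
        have h1 := C.h1
        have hj1 := C.hj1
        have hj := C.hj
        have hd : (x, y) ∈ Diagram d (stepShape lam i) := by
          rw [mem_eh] at h
          rcases h with ⟨rfl, rfl⟩ | h | h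
          · rw [diag_step C]; simp
          · exact h.1
          · omega
        rw [ef_diag hd, R.t0]
        have := ((hsf.1 hf).1.mapsTo hd).2
        rwa [size_step (by omega) (by have := C.hid; omega)] at this
      unfold bal
      rw [hz]
      unfold rk
      have h1 := C.h1
      have hj1 := C.hj1
      have hj := C.hj
      dsimp only
      rw [if_pos (by omega), step_toNat _ h1]
      simp
      omega
    · have := (core C R hN hm ((phi_diag C p).2 hp)).1 (hb' _ ((phi_diag C p).2 hp))
      rwa [phi_phi] at this
  · rintro ⟨hf, hb⟩
    have hfB := hsf.2 hf
    have hb' : ∀ p ∈ Diagram d (stepShape lam i), bal d (stepShape lam i) T p := hb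
    have hN : ∀ p ∈ Diagram d lam, B p ≤ sizeP d lam := fun p hp => (hfB.1.mapsTo hp).2
    have hm2 := mono2 C hf.1.injOn (by
      intro p hp
      rw [R.t0, R.eq p (hne p hp)]
      exact Nat.lt_succ_of_le (hN _ ((phi_diag C p).2 hp))) hb'
    have hm : ∀ a : ℤ, 1 ≤ a → a < i → B (a, j) < B (a, j + 1) := by
      intro a h1 h2
      have := hm2 _ a h1 h2 rfl
      rw [R.eq _ (by simp), R.eq _ (by simp; omega)] at this
      have e1 : phi i j (a, j + 1) = (a, j) := by
        unfold phi; dsimp only; rw [if_neg (by omega), if_pos (by omega)]; simp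
      have e2 : phi i j (a, j) = (a, j + 1) := by
        unfold phi; dsimp only; rw [if_pos (by omega)]
      rwa [e1, e2] at this
    refine ⟨hfB, ?_⟩
    intro p hp
    change bal d lam B p
    refine (core C R hN hm hp).2 (hb' _ ?_)
    rw [diag_step C]
    right
    exact (phi_diag C p).2 hp

lemma strict_anti {d : ℕ} {lam : ℕ → ℕ} (h : IsStrictPartition d lam) {a : ℕ} (ha : 1 ≤ a) :
    ∀ n : ℕ, a + n ≤ d → lam (a + n) + n ≤ lam a := by
  intro n
  induction n with
  | zero => simp
  | succ n ih =>
    intro hn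
    have h1 := ih (by omega)
    have h2 := h.1 (a + n) (by omega) (by omega)
    have e : a + (n + 1) = a + n + 1 := by ring
    rw [e]; omega

lemma strict_anti' {d : ℕ} {lam : ℕ → ℕ} (h : IsStrictPartition d lam) {a b : ℕ} (ha : 1 ≤ a)
    (hab : a ≤ b) (hb : b ≤ d) : lam b + b ≤ lam a + a := by
  have := strict_anti h ha (b - a) (by omega)
  rw [show a + (b - a) = b by omega] at this
  omega

lemma strict_lb {d : ℕ} {lam : ℕ → ℕ} (h : IsStrictPartition d lam) {a : ℕ} (ha : 1 ≤ a)
    (had : a ≤ d) : d + 1 ≤ lam a + a := by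
  have := strict_anti' h ha had le_rfl
  have := h.2
  omega

lemma ctx_of {d : ℕ} {lam : ℕ → ℕ} (h : IsStrictPartition d lam) {i : ℕ} (h1 : 1 ≤ i)
    (hid : i ≤ d) (hi : ∀ t, 1 ≤ t → t + 1 = i → lam i + 3 ≤ lam t) :
    Ctx d lam i ((lam i : ℤ) + (i : ℤ) - (d : ℤ)) := by
  refine ⟨by omega, by omega, rfl, ?_, ?_, ?_⟩
  · have := strict_lb h h1 hid
    omega
  · intro a ha hai
    have h2 := strict_anti' h (a := a.toNat) (b := i - 1) (by omega) (by omega) (by omega)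
    have := hi (i - 1) (by omega) (by omega)
    omega
  · intro a ha hai
    have h2 := strict_anti' h (a := i) (b := a.toNat) (by omega) (by omega) (by omega)
    omega

/-- the maximum entry in row `i` is at the end of the row -/
lemma max_end {d : ℕ} {lam : ℕ → ℕ} (h : IsStrictPartition d lam) {T : ℤ × ℤ → ℕ}
    (hT : IsBalanced d lam T) {i c : ℤ} (hm : (i, c) ∈ Diagram d lam)
    (hmax : T (i, c) = sizeP d lam) : c + d + 1 = (lam i.toNat : ℤ) + i := by
  have hb := hT.2 _ hm
  have hle : ∀ q, T q ≤ sizeP d lam := by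
    intro q
    by_cases hq : q ∈ Diagram d lam
    · exact (hT.1.1.mapsTo hq).2
    · rw [hT.1.2 q hq]; omega
  have hz : {q ∈ ExtHook d lam i c | T (i, c) < ExtFilling d T q} = ∅ := by
    ext q
    simp only [Set.mem_sep_iff, Set.mem_empty_iff_false, iff_false, not_and, not_lt]
    intro _
    rw [hmax]
    unfold ExtFilling
    split_ifs <;> exact hle _
  dsimp only at hb
  rw [hz] at hb
  rw [mem_diag] at hm
  unfold rk at hb
  simp only [Set.ncard_empty] at hb
  have l1 := strict_lb h (a := i.toNat) (by omega) (by omega)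
  split_ifs at hb with hc
  · push_cast at hb; omega
  · have l2 := strict_lb h (a := ((d : ℤ) + 1 + c).toNat) (by omega) (by omega)
    push_cast at hb
    omega

lemma addBox_phi (d : ℕ) (lam : ℕ → ℕ) (i N : ℕ) (B : ℤ × ℤ → ℕ) (p : ℤ × ℤ) :
    addBox d lam i N B p = if p = ((i : ℤ), (lam i : ℤ) + (i : ℤ) - (d : ℤ)) then N + 1
      else B (phi i ((lam i : ℤ) + (i : ℤ) - (d : ℤ)) p) := by
  unfold addBox phi
  split_ifs <;> rfl

lemma addBox_rel {d : ℕ} {lam : ℕ → ℕ} {i : ℕ} {N : ℕ} {B : ℤ × ℤ → ℕ}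
    (C : Ctx d lam i ((lam i : ℤ) + (i : ℤ) - (d : ℤ))) (hB : IsFilling d lam B) :
    Rel i ((lam i : ℤ) + (i : ℤ) - (d : ℤ)) N B (addBox d lam i N B) := by
  refine ⟨?_, hB.2 _ (ij_nmem C), ?_⟩
  · rw [addBox_phi, if_pos rfl]
  · intro q hq
    rw [addBox_phi, if_neg hq]

lemma strict_step {d : ℕ} {lam : ℕ → ℕ} (h : IsStrictPartition d lam) {i : ℕ}
    (hi : ∀ t, 1 ≤ t → t + 1 = i → lam i + 3 ≤ lam t) :
    IsStrictPartition d (stepShape lam i) := by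
  constructor
  · intro t h1 h2
    have := h.1 t h1 h2
    have h3 := hi t h1
    unfold stepShape
    split_ifs with ha hb hb
    · omega
    · subst ha; have := h3 rfl; omega
    · subst hb; omega
    · exact this
  · unfold stepShape
    have := h.2
    split_ifs with ha
    · omega
    · exact this

lemma step_bij {d : ℕ} {lam : ℕ → ℕ} (h : IsStrictPartition d lam) {i : ℕ} (h1 : 1 ≤ i)
    (hid : i ≤ d) (hi : ∀ t, 1 ≤ t → t + 1 = i → lam i + 3 ≤ lam t) :
    Set.BijOn (fun B => addBox d lam i (sizeP d lam) B) {B | IsBalanced d lam B}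
      {T | IsBalanced d (stepShape lam i) T ∧ ∃ c : ℤ, T ((i : ℤ), c) = sizeP d lam + 1} := by
  have C := ctx_of h h1 hid hi
  refine ⟨?_, ?_, ?_⟩
  · intro B hB
    have R := addBox_rel (N := sizeP d lam) C hB.1
    exact ⟨(step_bal C R).1 hB, _, R.t0⟩
  · intro B hB B' hB' heq
    have R := addBox_rel (N := sizeP d lam) C hB.1
    have R' := addBox_rel (N := sizeP d lam) C hB'.1
    funext q
    by_cases hq : q = ((i : ℤ), (lam i : ℤ) + (i : ℤ) - (d : ℤ))
    · rw [hq, R.b0, R'.b0]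
    · have e1 := R.eq _ (phi_ne _ _ hq)
      have e2 := R'.eq _ (phi_ne _ _ hq)
      rw [phi_phi] at e1 e2
      rw [← e1, ← e2]
      exact congrFun heq _
  · rintro T ⟨hT, c, hc⟩
    have hmem : ((i : ℤ), c) ∈ Diagram d (stepShape lam i) := by
      by_contra hn
      have := hT.1.2 _ hn
      omega
    have hend := max_end (strict_step h hi) hT hmem (by rw [size_step h1 hid]; exact hc)
    rw [step_toNat _ (by omega)] at hend
    simp at hend
    have hce : c = (lam i : ℤ) + (i : ℤ) - (d : ℤ) := by omega
    rw [hce] at hc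
    set j := (lam i : ℤ) + (i : ℤ) - (d : ℤ) with hj
    have R : Rel i j (sizeP d lam) (fun q => if q = ((i : ℤ), j) then 0 else T (phi i j q)) T := by
      refine ⟨hc, by simp, ?_⟩
      intro q hq
      simp only [phi_ne i j hq, if_false, phi_phi]
    have hB := (step_bal C R).2 hT
    refine ⟨_, hB, ?_⟩
    funext q
    show addBox _ _ _ _ _ q = _
    rw [addBox_phi, ← hj]
    by_cases hq : q = ((i : ℤ), j)
    · rw [if_pos hq, hq, hc]
    · rw [if_neg hq]
      exact (R.eq q hq).symm

lemma phi_fst (i : ℕ) (j : ℤ) (p : ℤ × ℤ) : (phi i j p).1 = p.1 := by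
  unfold phi; split_ifs <;> rfl

lemma addBox_row {d : ℕ} {lam : ℕ → ℕ} {i : ℕ} {N : ℕ} {B : ℤ × ℤ → ℕ}
    (C : Ctx d lam i ((lam i : ℤ) + (i : ℤ) - (d : ℤ))) (hB : IsFilling d lam B)
    (a : ℤ) (k : ℕ) (hk : 1 ≤ k) (hkN : k ≤ N) :
    (∃ c, addBox d lam i N B (a, c) = k) ↔ ∃ c, B (a, c) = k := by
  have R := addBox_rel (N := N) C hB
  set j := (lam i : ℤ) + (i : ℤ) - (d : ℤ)
  have hph : ∀ c, phi i j (a, c) = (a, (phi i j (a, c)).2) := fun c => by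
    conv_lhs => rw [← Prod.mk.eta (p := phi i j (a, c)), phi_fst]
  constructor
  · rintro ⟨c, hc⟩
    by_cases hq : (a, c) = ((i : ℤ), j)
    · rw [hq, R.t0] at hc; omega
    · rw [R.eq _ hq, hph] at hc
      exact ⟨_, hc⟩
  · rintro ⟨c, hc⟩
    by_cases hq : (a, c) = ((i : ℤ), j)
    · rw [hq, R.b0] at hc; omega
    · refine ⟨(phi i j (a, c)).2, ?_⟩
      rw [← hph, R.eq _ (phi_ne i j hq), phi_phi, hc]

lemma bal_congr {d : ℕ} {lam lam' : ℕ → ℕ} (h : ∀ t, 1 ≤ t → t ≤ d → lam t = lam' t)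
    {B : ℤ × ℤ → ℕ} (hB : IsBalanced d lam B) : IsBalanced d lam' B := by
  have hD : Diagram d lam = Diagram d lam' := by
    ext ⟨a, c⟩
    simp only [mem_diag]
    by_cases ha : 1 ≤ a ∧ a ≤ d
    · rw [h a.toNat (by omega) (by omega)]
    · omega
  have hs : sizeP d lam = sizeP d lam' := by
    unfold sizeP
    apply Finset.sum_congr rfl
    intro t ht
    rw [Finset.mem_Icc] at ht
    exact h t ht.1 ht.2
  have hE : ∀ i c, ExtHook d lam i c = ExtHook d lam' i c := by
    intro i c
    unfold ExtHook Hook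
    rw [hD]
  obtain ⟨hf, hb⟩ := hB
  refine ⟨by unfold IsFilling at hf ⊢; rwa [← hD, ← hs], ?_⟩
  rintro ⟨a, c⟩ hp
  rw [← hD] at hp
  have := hb _ hp
  rw [mem_diag] at hp
  rw [← hE, this]
  unfold rk
  dsimp only
  rw [h a.toNat (by omega) (by omega)]
  split_ifs with hc
  · rfl
  · rw [h ((d : ℤ) + 1 + c).toNat (by omega) (by omega)]

/-- the successive entries after `N` lie in the rows listed -/
def rowCond (T : ℤ × ℤ → ℕ) : List ℕ → ℕ → Prop
  | [], _ => True
  | i :: rest, N => (∃ c : ℤ, T ((i : ℤ), c) = N + 1) ∧ rowCond T rest (N + 1)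

structure Good (d r : ℕ) (lam : ℕ → ℕ) (L : List ℕ) : Prop where
  strict : IsStrictPartition d lam
  rng : ∀ i ∈ L, 1 ≤ i ∧ i ≤ d
  sorted : L.Pairwise (· ≤ ·)
  cnt : ∀ t, 1 ≤ t → t ≤ d → lam t + L.count t = Zlam d r t

lemma Good.hi {d r : ℕ} {lam : ℕ → ℕ} {i : ℕ} {L : List ℕ} (G : Good d r lam (i :: L)) :
    ∀ t, 1 ≤ t → t + 1 = i → lam i + 3 ≤ lam t := by
  intro t h1 h2
  have hr := G.rng i (by simp)
  have c1 := G.cnt i hr.1 hr.2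
  have c2 := G.cnt t h1 (by omega)
  have hz : (i :: L).count t = 0 := by
    rw [List.count_eq_zero]
    intro hm
    have hs := List.pairwise_cons.1 G.sorted
    rcases List.mem_cons.1 hm with h | h
    · omega
    · have := hs.1 t h; omega
  rw [List.count_cons_self] at c1
  unfold Zlam at c1 c2
  omega

lemma Good.tail {d r : ℕ} {lam : ℕ → ℕ} {i : ℕ} {L : List ℕ} (G : Good d r lam (i :: L)) :
    Good d r (stepShape lam i) L := by
  refine ⟨strict_step G.strict G.hi, fun t ht => G.rng t (by simp [ht]),
    (List.pairwise_cons.1 G.sorted).2, ?_⟩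
  intro t h1 h2
  have := G.cnt t h1 h2
  unfold stepShape
  split_ifs with h
  · subst h
    rw [List.count_cons_self] at this; omega
  · rw [List.count_cons_of_ne (fun h' => h h'.symm)] at this; omega

lemma good_shape {d r : ℕ} (L : List ℕ) : ∀ {lam : ℕ → ℕ}, Good d r lam L →
    ∀ t, 1 ≤ t → t ≤ d → shapeAux L lam t = Zlam d r t := by
  induction L with
  | nil => intro lam G t h1 h2; simpa [shapeAux] using G.cnt t h1 h2
  | cons i L ih => intro lam G; exact ih G.tail

lemma fmap_row {d r : ℕ} (L : List ℕ) : ∀ {lam : ℕ → ℕ}, Good d r lam L →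
    ∀ {B : ℤ × ℤ → ℕ}, IsBalanced d lam B → ∀ (a : ℤ) (k : ℕ), 1 ≤ k → k ≤ sizeP d lam →
    ((∃ c, FmapAux d L lam B (a, c) = k) ↔ ∃ c, B (a, c) = k) := by
  induction L with
  | nil => intro lam G B hB a k h1 h2; rfl
  | cons i L ih =>
    intro lam G B hB a k h1 h2
    have hr := G.rng i (by simp)
    have hB' := ((step_bij G.strict hr.1 hr.2 G.hi).mapsTo hB).1
    show (∃ c, FmapAux d L _ _ (a, c) = k) ↔ _
    rw [ih G.tail hB' a k h1 (by rw [size_step hr.1 hr.2]; omega)]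
    exact addBox_row (ctx_of G.strict hr.1 hr.2 G.hi) hB.1 a k h1 h2

lemma main_bij {d r : ℕ} (L : List ℕ) : ∀ {lam : ℕ → ℕ}, Good d r lam L →
    Set.BijOn (fun B => FmapAux d L lam B) {B | IsBalanced d lam B}
      {T | IsBalanced d (Zlam d r) T ∧ rowCond T L (sizeP d lam)} := by
  induction L with
  | nil =>
    intro lam G
    have h : ∀ t, 1 ≤ t → t ≤ d → lam t = Zlam d r t := fun t h1 h2 => by
      simpa using G.cnt t h1 h2
    have : {T | IsBalanced d (Zlam d r) T ∧ rowCond T [] (sizeP d lam)} =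
        {B | IsBalanced d lam B} := by
      ext T
      simp only [rowCond, and_true, Set.mem_ofPred_eq]
      exact ⟨fun hT => bal_congr (fun t h1 h2 => (h t h1 h2).symm) hT, fun hT => bal_congr h hT⟩
    rw [this]
    exact Set.bijOn_id _
  | cons i L ih =>
    intro lam G
    have hr := G.rng i (by simp)
    have hs := step_bij G.strict hr.1 hr.2 G.hi
    have ht := ih G.tail
    have hsz := size_step (lam := lam) hr.1 hr.2
    refine Set.BijOn.comp (g := fun B => FmapAux d L (stepShape lam i) B)
      (t := {T | IsBalanced d (stepShape lam i) T ∧ ∃ c : ℤ, T ((i : ℤ), c) = sizeP d lam + 1})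
      ?_ hs
    rw [hsz] at ht
    refine ⟨?_, ?_, ?_⟩
    · rintro B ⟨hB, hc⟩
      have := ht.mapsTo hB
      exact ⟨this.1, (fmap_row L G.tail hB i _ (by omega) (by omega)).2 hc, this.2⟩
    · exact ht.injOn.mono (fun B hB => hB.1)
    · rintro T ⟨hT, hc, hrc⟩
      obtain ⟨B, hB, rfl⟩ := ht.surjOn ⟨hT, hrc⟩
      exact ⟨B, ⟨hB, (fmap_row L G.tail hB i _ (by omega) (by omega)).1 hc⟩, rfl⟩

lemma rowCond_append (T : ℤ × ℤ → ℕ) (L L' : List ℕ) : ∀ N,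
    rowCond T (L ++ L') N ↔ rowCond T L N ∧ rowCond T L' (N + L.length) := by
  induction L with
  | nil => intro N; simp [rowCond]
  | cons i L ih =>
    intro N
    simp only [List.cons_append, rowCond, ih, List.length_cons, and_assoc]
    rw [show N + 1 + L.length = N + (L.length + 1) by ring]

lemma rowCond_replicate (T : ℤ × ℤ → ℕ) (i m : ℕ) : ∀ N,
    rowCond T (List.replicate m i) N ↔
      ∀ k, N + 1 ≤ k → k ≤ N + m → ∃ c : ℤ, T ((i : ℤ), c) = k := by
  induction m with
  | zero => intro N; simp [rowCond]; omega
  | succ m ih =>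
    intro N
    simp only [List.replicate_succ, rowCond, ih]
    constructor
    · rintro ⟨h1, h2⟩ k hk hk2
      by_cases h : k = N + 1
      · subst h; exact h1
      · exact h2 k (by omega) (by omega)
    · intro h
      exact ⟨h _ (by omega) (by omega), fun k h1 h2 => h k (by omega) (by omega)⟩

def rl (d r : ℕ) (lam : ℕ → ℕ) (n : ℕ) : List ℕ :=
  (List.range n).flatMap fun k => List.replicate (muF d r lam (k + 1)) (k + 1)

lemma rl_succ (d r : ℕ) (lam : ℕ → ℕ) (n : ℕ) :
    rl d r lam (n + 1) = rl d r lam n ++ List.replicate (muF d r lam (n + 1)) (n + 1) := by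
  simp [rl, List.range_succ, List.flatMap_append]

lemma sigma_succ (d r : ℕ) (lam : ℕ → ℕ) (n : ℕ) :
    sigmaF d r lam (n + 1) = sigmaF d r lam n + muF d r lam (n + 1) := by
  unfold sigmaF
  rw [Finset.sum_Icc_succ_top (by omega)]

lemma rl_len (d r : ℕ) (lam : ℕ → ℕ) (n : ℕ) : (rl d r lam n).length = sigmaF d r lam n := by
  induction n with
  | zero => simp [rl, sigmaF]
  | succ n ih => rw [rl_succ, sigma_succ, List.length_append, ih, List.length_replicate]

lemma rl_mem (d r : ℕ) (lam : ℕ → ℕ) (n : ℕ) : ∀ i ∈ rl d r lam n, 1 ≤ i ∧ i ≤ n := by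
  induction n with
  | zero => simp [rl]
  | succ n ih =>
    intro i hi
    rw [rl_succ, List.mem_append] at hi
    rcases hi with hi | hi
    · have := ih i hi; omega
    · have := List.eq_of_mem_replicate hi; omega

lemma rl_sorted (d r : ℕ) (lam : ℕ → ℕ) (n : ℕ) : (rl d r lam n).Pairwise (· ≤ ·) := by
  induction n with
  | zero => simp [rl]
  | succ n ih =>
    rw [rl_succ, List.pairwise_append]
    refine ⟨ih, ?_, ?_⟩
    · rw [List.pairwise_replicate]; right; exact le_rfl
    · intro a ha b hb
      have := rl_mem d r lam n a ha
      have := List.eq_of_mem_replicate hb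
      omega

lemma rl_count (d r : ℕ) (lam : ℕ → ℕ) (n : ℕ) (t : ℕ) (h1 : 1 ≤ t) :
    (rl d r lam n).count t = if t ≤ n then muF d r lam t else 0 := by
  induction n with
  | zero => simp [rl]; omega
  | succ n ih =>
    rw [rl_succ, List.count_append, ih, List.count_replicate]
    by_cases h : t = n + 1
    · subst h; simp
    · have : ¬ (n + 1 = t) := by omega
      have h3 : t ≤ n + 1 ↔ t ≤ n := by omega
      simp [this, h3]

lemma rl_cond (d r : ℕ) (lam : ℕ → ℕ) (T : ℤ × ℤ → ℕ) (N n : ℕ) :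
    rowCond T (rl d r lam n) N ↔ ∀ i : ℕ, 1 ≤ i → i ≤ n →
      ∀ k : ℕ, N + sigmaF d r lam (i - 1) + 1 ≤ k → k ≤ N + sigmaF d r lam i →
      ∃ c : ℤ, T ((i : ℤ), c) = k := by
  induction n with
  | zero => simp [rl, rowCond]; omega
  | succ n ih =>
    rw [rl_succ, rowCond_append, ih, rowCond_replicate, rl_len]
    constructor
    · rintro ⟨h1, h2⟩ i hi hi2 k hk hk2
      by_cases h : i = n + 1
      · subst h
        rw [sigma_succ] at hk2
        exact h2 k hk (by omega)
      · exact h1 i hi (by omega) k hk hk2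
    · intro h
      refine ⟨fun i hi hi2 => h i hi (by omega), fun k hk hk2 => ?_⟩
      exact h (n + 1) (by omega) le_rfl k hk (by rw [sigma_succ]; omega)

/-- the composition `F = (f_d)^{μ_d} ∘ ⋯ ∘ (f_1)^{μ_1}` of box-adding
maps is well defined (the final shape is `Z(d,r)`) and is a bijection from `BS(λ)`
onto `BS(Z(d,r))|_λ`. -/
theorem padding_bijection (d r : ℕ) (hd : 1 ≤ d)
    (lam : ℕ → ℕ) (hlam : IsStrictPartition d lam)
    (hsub : ∀ i : ℕ, 1 ≤ i → i ≤ d → lam i ≤ Zlam d r i) :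
    (∀ i : ℕ, 1 ≤ i → i ≤ d → shapeAux (rowsList d r lam) lam i = Zlam d r i) ∧
      Set.BijOn (fun B => FmapAux d (rowsList d r lam) lam B)
        {B : ℤ × ℤ → ℕ | IsBalanced d lam B} (BSRestricted d r lam) := by
  have G : Good d r lam (rl d r lam d) := by
    refine ⟨hlam, rl_mem d r lam d, rl_sorted d r lam d, ?_⟩
    intro t h1 h2
    have := hsub t h1 h2
    rw [rl_count _ _ _ _ _ h1, if_pos h2]
    unfold Zlam at this ⊢
    unfold muF
    omega
  refine ⟨good_shape _ G, ?_⟩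
  have hE : BSRestricted d r lam =
      {T | IsBalanced d (Zlam d r) T ∧ rowCond T (rl d r lam d) (sizeP d lam)} := by
    ext T
    simp only [BSRestricted, Set.mem_ofPred_eq, rl_cond]
    constructor
    · rintro ⟨hT, h⟩
      refine ⟨hT, fun i h1 h2 k hk hk2 => ?_⟩
      obtain ⟨c, -, hc⟩ := h i h1 h2 k hk hk2
      exact ⟨c, hc⟩
    · rintro ⟨hT, h⟩
      refine ⟨hT, fun i h1 h2 k hk hk2 => ?_⟩
      obtain ⟨c, hc⟩ := h i h1 h2 k hk hk2
      refine ⟨c, ?_, hc⟩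
      by_contra hn
      have := hT.1.2 _ hn
      omega
  rw [hE]
  exact main_bij _ G

end BST
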